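/- For any two convex bodies A and B in ℝ², there exist an invertible affine map T : ℝ² → ℝ², a point c ∈ ℝ² and a real number λ with 1 ≤ λ ≤ (19 − √73)/4 such that T(A) ⊆ B ⊆ c + λ • (T(A) − c) (i.e. B is contained in the homothety of T(A) with center c and ratio λ). In particular, the Banach–Mazur diameter of the family of planar convex bodies is at most (19 − √73)/4 < 2.614. -/

import Mathlib

/-- A convex body in the plane: compact, convex, with nonempty interior. -/
def IsConvexBody (A : Set (ℝ × ℝ)) : Prop :=
  Convex ℝ A ∧ IsCompact A ∧ (interior A).Nonempty

namespace BM

infixl:65 "+ₙ" => Nat.add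
infixl:65 "-ₙ" => Nat.sub
infixl:70 "*ₙ" => Nat.mul
infixl:70 "/ₙ" => Nat.div
infix:50 "≤ₙ" => Nat.ble

/-- forces evaluation of its first argument -/
noncomputable def fz {α : Type} (n : Nat) (k : Nat → α) : α :=
  Nat.rec (k 0) (fun m _ => k (Nat.succ m)) n

noncomputable def bc {α : Type} (b : Bool) (t f : α) : α := Bool.rec f t b

noncomputable def mx (x y : Nat) : Nat :=
  fz x fun x => fz y fun y => bc (x ≤ₙ y) y x

noncomputable def mn (x y : Nat) : Nat :=
  fz x fun x => fz y fun y => bc (x ≤ₙ y) x y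

/-- value of a candidate, `0` if it is not feasible -/
noncomputable def feasE (a1 a2 a3 r1 r2 r3 x1 x2 x3 : Nat) : Nat :=
  bc (x1 *ₙ 4096 +ₙ a2 *ₙ x2 ≤ₙ r3 *ₙ 4096)
    (bc (x2 *ₙ 4096 +ₙ a1 *ₙ x1 ≤ₙ r3 *ₙ 4096)
      (bc (x1 *ₙ 4096 +ₙ a3 *ₙ x3 ≤ₙ r2 *ₙ 4096)
        (bc (x3 *ₙ 4096 +ₙ a1 *ₙ x1 ≤ₙ r2 *ₙ 4096)
          (bc (x2 *ₙ 4096 +ₙ a3 *ₙ x3 ≤ₙ r1 *ₙ 4096)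
            (bc (x3 *ₙ 4096 +ₙ a2 *ₙ x2 ≤ₙ r1 *ₙ 4096)
              (a1 *ₙ x1 +ₙ a2 *ₙ x2 +ₙ a3 *ₙ x3) 0) 0) 0) 0) 0) 0

/-- complete a candidate by choosing `x1` -/
noncomputable def cand (a1 a2 a3 r1 r2 r3 x2 x3 : Nat) : Nat :=
  fz (mn (mn ((r3 *ₙ 4096 -ₙ a2 *ₙ x2) /ₙ 4096) ((r2 *ₙ 4096 -ₙ a3 *ₙ x3) /ₙ 4096))
    ((mn (r3 -ₙ x2) (r2 -ₙ x3) *ₙ 4096) /ₙ a1))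
    fun x1 => feasE a1 a2 a3 r1 r2 r3 x1 x2 x3

noncomputable def EEr (a1 a2 a3 r1 r2 r3 : Nat) : Nat :=
  mx (fz (mn r1 (((4096 -ₙ a1) *ₙ r3 *ₙ 4096) /ₙ (16777216 -ₙ a1 *ₙ a2))) fun y =>
      cand a1 a2 a3 r1 r2 r3 y 0)
    (fz (mn ((r1 *ₙ 4096) /ₙ (4096 +ₙ a2)) ((r2 *ₙ 4096) /ₙ (4096 +ₙ a1))) fun h =>
      cand a1 a2 a3 r1 r2 r3 h h)

/-- lower bound for the LP value -/
noncomputable def EE (a1 a2 a3 b1 b2 b3 : Nat) : Nat :=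
  fz (4096 -ₙ b1) fun r1 => fz (4096 -ₙ b2) fun r2 => fz (4096 -ₙ b3) fun r3 =>
  EEr a1 a2 a3 r1 r2 r3

noncomputable def gg (x y : Nat) : Nat := 4096 *ₙ (x +ₙ y) -ₙ 2 *ₙ (x *ₙ y)

/-- maximum of `M (x+y) - 2 x y` over the corners -/
noncomputable def gm (l h l' h' : Nat) : Nat :=
  bc (h ≤ₙ 2048) (bc (h' ≤ₙ 2048) (gg h h') (mx (gg h h') (gg l h')))
    (mx (mx (gg l l') (gg l h')) (mx (gg h l') (gg h h')))

noncomputable def Ftest (al1 al2 al3 ah1 ah2 ah3 bl1 bl2 bl3 bh1 bh2 bh3 : Nat) : Bool :=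
  fz (33554432 +ₙ (gm al1 ah1 bl1 bh1 +ₙ gm al2 ah2 bl2 bh2 +ₙ gm al3 ah3 bl3 bh3)) fun K =>
  fz (4096 *ₙ mx ((al1 +ₙ al2 +ₙ al3) -ₙ (bh1 +ₙ bh2 +ₙ bh3))
    ((bl1 +ₙ bl2 +ₙ bl3) -ₙ (ah1 +ₙ ah2 +ₙ ah3))) fun D =>
  (K *ₙ K *ₙ 10000 ≤ₙ 29429897664959348736 +ₙ D *ₙ D *ₙ 10000)

noncomputable def Ntest (al1 al2 al3 ah1 ah2 ah3 bl1 bl2 bl3 bh1 bh2 bh3 : Nat) : Bool :=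
  ((33554432 -ₙ EE al1 al2 al3 bh1 bh2 bh3) *ₙ (33554432 -ₙ EE bl1 bl2 bl3 ah1 ah2 ah3) *ₙ 10000
    ≤ₙ 7357474416239837184)

/-- the box of one body is empty -/
noncomputable def emp (l1 l2 l3 h1 h2 h3 : Nat) : Bool :=
  bc (l1 ≤ₙ h1) (bc (l2 ≤ₙ h2) (bc (l3 ≤ₙ h3)
    (bc (l1 *ₙ (4096 +ₙ l2) ≤ₙ 16777216) (bc ((l2 +ₙ l3) *ₙ (4096 +ₙ l1) ≤ₙ 16777216) false true) true)
      true) true) true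

abbrev Ch := Nat → Nat → Nat → Nat → Nat → Nat → Nat → Nat → Nat → Nat → Nat → Nat → Bool

noncomputable def an (x y : Bool) : Bool := bc x y false

noncomputable def split (ih : Ch) (w1 w2 w3 v1 v2 _v3 m : Nat)
    (al1 al2 al3 ah1 ah2 ah3 bl1 bl2 bl3 bh1 bh2 bh3 : Nat) : Bool :=
  bc (m ≤ₙ w2) (fz ((al2 +ₙ ah2) /ₙ 2) fun c =>
    an (ih al1 al2 al3 ah1 c ah3 bl1 bl2 bl3 bh1 bh2 bh3) (ih al1 c al3 ah1 ah2 ah3 bl1 bl2 bl3 bh1 bh2 bh3))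
  (bc (m ≤ₙ v2) (fz ((bl2 +ₙ bh2) /ₙ 2) fun c =>
    an (ih al1 al2 al3 ah1 ah2 ah3 bl1 bl2 bl3 bh1 c bh3) (ih al1 al2 al3 ah1 ah2 ah3 bl1 c bl3 bh1 bh2 bh3))
  (bc (m ≤ₙ w1) (fz ((al1 +ₙ ah1) /ₙ 2) fun c =>
    an (ih al1 al2 al3 c ah2 ah3 bl1 bl2 bl3 bh1 bh2 bh3) (ih c al2 al3 ah1 ah2 ah3 bl1 bl2 bl3 bh1 bh2 bh3))
  (bc (m ≤ₙ v1) (fz ((bl1 +ₙ bh1) /ₙ 2) fun c =>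
    an (ih al1 al2 al3 ah1 ah2 ah3 bl1 bl2 bl3 c bh2 bh3) (ih al1 al2 al3 ah1 ah2 ah3 c bl2 bl3 bh1 bh2 bh3))
  (bc (m ≤ₙ w3) (fz ((al3 +ₙ ah3) /ₙ 2) fun c =>
    an (ih al1 al2 al3 ah1 ah2 c bl1 bl2 bl3 bh1 bh2 bh3) (ih al1 al2 c ah1 ah2 ah3 bl1 bl2 bl3 bh1 bh2 bh3))
  (fz ((bl3 +ₙ bh3) /ₙ 2) fun c =>
    an (ih al1 al2 al3 ah1 ah2 ah3 bl1 bl2 bl3 bh1 bh2 c) (ih al1 al2 al3 ah1 ah2 ah3 bl1 bl2 c bh1 bh2 bh3))))))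

noncomputable def split0 (ih : Ch) (w1 w2 w3 v1 v2 v3 : Nat) : Ch :=
  fz (mx (mx (mx w2 v2) (mx w1 v1)) (mx w3 v3)) fun m => split ih w1 w2 w3 v1 v2 v3 m

noncomputable def tests (ih : Ch) (al1 al2 al3 ah1 ah2 ah3 bl1 bl2 bl3 bh1 bh2 bh3 : Nat) : Bool :=
  bc (emp al1 al2 al3 ah1 ah2 ah3) true
  (bc (emp bl1 bl2 bl3 bh1 bh2 bh3) true
  (bc (bl1 ≤ₙ ah1)
    (bc (Ftest al1 al2 al3 ah1 ah2 ah3 bl1 bl2 bl3 bh1 bh2 bh3) true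
    (bc (Ntest al1 al2 al3 ah1 ah2 ah3 bl1 bl2 bl3 bh1 bh2 bh3) true
    (split0 ih (2 *ₙ (ah1 -ₙ al1)) (3 *ₙ (ah2 -ₙ al2)) (2 *ₙ (ah3 -ₙ al3))
      (2 *ₙ (bh1 -ₙ bl1)) (3 *ₙ (bh2 -ₙ bl2)) (2 *ₙ (bh3 -ₙ bl3))
      al1 al2 al3 ah1 ah2 ah3 bl1 bl2 bl3 bh1 bh2 bh3))) true))

noncomputable def tightB (ih : Ch) (al1 al2 al3 ah1 ah2 ah3 bl1 bl2 bl3 bh1 bh2 bh3 : Nat) : Bool :=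
  fz (mx bl2 bl3) fun bl2 => fz (mx bl1 bl2) fun bl1 =>
  fz (mn bh2 bh1) fun bh2 => fz (mn bh3 bh2) fun bh3 =>
  tests ih al1 al2 al3 ah1 ah2 ah3 bl1 bl2 bl3 bh1 bh2 bh3

noncomputable def tightA (ih : Ch) (al1 al2 al3 ah1 ah2 ah3 bl1 bl2 bl3 bh1 bh2 bh3 : Nat) : Bool :=
  fz (mx al2 al3) fun al2 => fz (mx al1 al2) fun al1 =>
  fz (mn ah2 ah1) fun ah2 => fz (mn ah3 ah2) fun ah3 =>
  tightB ih al1 al2 al3 ah1 ah2 ah3 bl1 bl2 bl3 bh1 bh2 bh3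

noncomputable def chk (n : Nat) : Ch :=
  Nat.rec (fun _ _ _ _ _ _ _ _ _ _ _ _ => false) (fun _ ih => tightA ih) n

theorem fz_eq {α : Type} (n : Nat) (k : Nat → α) : fz n k = k n := by
  cases n <;> rfl

theorem bc_eq {α : Type} (b : Bool) (t f : α) : bc b t f = if b = true then t else f := by
  cases b <;> rfl

theorem ble_eq (x y : Nat) : (Nat.ble x y = true) = (x ≤ y) := by
  simp

theorem nadd (x y : Nat) : Nat.add x y = x + y := rfl
theorem nmul (x y : Nat) : Nat.mul x y = x * y := rfl
theorem nsub (x y : Nat) : Nat.sub x y = x - y := rfl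
theorem ndiv (x y : Nat) : Nat.div x y = x / y := rfl

theorem mx_eq (x y : Nat) : mx x y = max x y := by
  simp only [mx, fz_eq, bc_eq, ble_eq]; split_ifs <;> omega

theorem mn_eq (x y : Nat) : mn x y = min x y := by
  simp only [mn, fz_eq, bc_eq, ble_eq]; split_ifs <;> omega

def NF (a1 a2 a3 r1 r2 r3 E : Nat) : Prop := ∃ x1 x2 x3 : Nat,
  x1 * 4096 + a2 * x2 ≤ r3 * 4096 ∧ x2 * 4096 + a1 * x1 ≤ r3 * 4096 ∧
  x1 * 4096 + a3 * x3 ≤ r2 * 4096 ∧ x3 * 4096 + a1 * x1 ≤ r2 * 4096 ∧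
  x2 * 4096 + a3 * x3 ≤ r1 * 4096 ∧ x3 * 4096 + a2 * x2 ≤ r1 * 4096 ∧
  E = a1 * x1 + a2 * x2 + a3 * x3

theorem NF_zero (a1 a2 a3 r1 r2 r3 : Nat) : NF a1 a2 a3 r1 r2 r3 0 :=
  ⟨0, 0, 0, by simp, by simp, by simp, by simp, by simp, by simp, by simp⟩

theorem feasE_NF (a1 a2 a3 r1 r2 r3 x1 x2 x3 : Nat) :
    NF a1 a2 a3 r1 r2 r3 (feasE a1 a2 a3 r1 r2 r3 x1 x2 x3) := by
  simp only [feasE, bc_eq, ble_eq, nadd, nmul]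
  split_ifs with h1 h2 h3 h4 h5 h6
  · exact ⟨x1, x2, x3, h1, h2, h3, h4, h5, h6, rfl⟩
  all_goals exact NF_zero _ _ _ _ _ _

theorem cand_NF (a1 a2 a3 r1 r2 r3 x2 x3 : Nat) :
    NF a1 a2 a3 r1 r2 r3 (cand a1 a2 a3 r1 r2 r3 x2 x3) := by
  rw [cand, fz_eq]; exact feasE_NF _ _ _ _ _ _ _ _ _

theorem EE_NF (a1 a2 a3 b1 b2 b3 : Nat) :
    NF a1 a2 a3 (4096 - b1) (4096 - b2) (4096 - b3) (EE a1 a2 a3 b1 b2 b3) := by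
  simp only [EE, EEr, fz_eq, mx_eq, nsub]
  rcases max_choice (cand a1 a2 a3 (4096 - b1) (4096 - b2) (4096 - b3) (mn (4096 - b1) (((4096 - a1) *ₙ (4096 - b3) *ₙ 4096) /ₙ (16777216 - a1 *ₙ a2))) 0) (cand a1 a2 a3 (4096 - b1) (4096 - b2) (4096 - b3) (mn (((4096 - b1) *ₙ 4096) /ₙ (4096 +ₙ a2)) (((4096 - b2) *ₙ 4096) /ₙ (4096 +ₙ a1))) (mn (((4096 - b1) *ₙ 4096) /ₙ (4096 +ₙ a2)) (((4096 - b2) *ₙ 4096) /ₙ (4096 +ₙ a1)))) with h | h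
  · rw [h]; exact cand_NF _ _ _ _ _ _ _ _
  · rw [h]; exact cand_NF _ _ _ _ _ _ _ _

/-- admissible parameters -/
def DD (a1 a2 a3 : ℝ) : Prop :=
  a1 ≤ 1 ∧ a2 ≤ a1 ∧ a3 ≤ a2 ∧ 0 ≤ a3 ∧ a1 * (1 + a2) ≤ 1 ∧ (a2 + a3) * (1 + a1) ≤ 1

/-- feasible slack vectors for the negative placement -/
def FE (a1 a2 a3 b1 b2 b3 e1 e2 e3 : ℝ) : Prop :=
  (0 ≤ e1 ∧ 0 ≤ e2 ∧ 0 ≤ e3) ∧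
  e1 + a1 * e2 ≤ a1 * (1 - b3) ∧ e1 + a1 * e3 ≤ a1 * (1 - b2) ∧
  e2 + a2 * e1 ≤ a2 * (1 - b3) ∧ e2 + a2 * e3 ≤ a2 * (1 - b1) ∧
  e3 + a3 * e1 ≤ a3 * (1 - b2) ∧ e3 + a3 * e2 ≤ a3 * (1 - b1)

def FP (a1 a2 a3 b1 b2 b3 : ℝ) : Prop :=
  (1 + ((1 - a1) * b1 + (1 - a2) * b2 + (1 - a3) * b3)) *
    (1 + ((1 - b1) * a1 + (1 - b2) * a2 + (1 - b3) * a3)) ≤ 26139 / 10000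

def NP (a1 a2 a3 b1 b2 b3 : ℝ) : Prop :=
  ∃ e1 e2 e3 f1 f2 f3 : ℝ, FE a1 a2 a3 b1 b2 b3 e1 e2 e3 ∧ FE b1 b2 b3 a1 a2 a3 f1 f2 f3 ∧
    (2 - (e1 + e2 + e3)) * (2 - (f1 + f2 + f3)) ≤ 26139 / 10000

theorem FEaux {a l x r R e : ℝ} (ha : 0 ≤ a) (hl : l ≤ 4096 * a) (hx : 0 ≤ x)
    (h : x + 4096 * e ≤ r) (hr : r ≤ 4096 * R) : l * x / 16777216 + a * e ≤ a * R := by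
  have h1 : l * x ≤ 4096 * a * x := mul_le_mul_of_nonneg_right hl hx
  have : a * (x + 4096 * e) ≤ a * (4096 * R) := mul_le_mul_of_nonneg_left (h.trans hr) ha
  linarith

theorem rcast {b : Nat} {t : ℝ} (h : 4096 * t ≤ b) (ht : t ≤ 1) :
    (((4096 - b : Nat)) : ℝ) ≤ 4096 * (1 - t) := by
  rcases le_total b 4096 with h1 | h1
  · rw [Nat.cast_sub h1]; push_cast; linarith
  · rw [Nat.sub_eq_zero_of_le h1]; push_cast; linarith

theorem NF_FE {l1 l2 l3 h1 h2 h3 E : Nat} {a1 a2 a3 b1 b2 b3 : ℝ}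
    (hE : NF l1 l2 l3 (4096 - h1) (4096 - h2) (4096 - h3) E)
    (ha1 : 0 ≤ a1) (ha2 : 0 ≤ a2) (ha3 : 0 ≤ a3)
    (hb1 : b1 ≤ 1) (hb2 : b2 ≤ 1) (hb3 : b3 ≤ 1)
    (la1 : (l1 : ℝ) ≤ 4096 * a1) (la2 : (l2 : ℝ) ≤ 4096 * a2) (la3 : (l3 : ℝ) ≤ 4096 * a3)
    (ub1 : 4096 * b1 ≤ (h1 : ℝ)) (ub2 : 4096 * b2 ≤ (h2 : ℝ)) (ub3 : 4096 * b3 ≤ (h3 : ℝ)) :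
    ∃ e1 e2 e3 : ℝ, FE a1 a2 a3 b1 b2 b3 e1 e2 e3 ∧ (E : ℝ) = 16777216 * (e1 + e2 + e3) := by
  obtain ⟨x1, x2, x3, c1, c2, c3, c4, c5, c6, rfl⟩ := hE
  have r1 := rcast ub1 hb1
  have r2 := rcast ub2 hb2
  have r3 := rcast ub3 hb3
  generalize 4096 - h1 = s1 at *
  generalize 4096 - h2 = s2 at *
  generalize 4096 - h3 = s3 at *
  have d1 : (x1 : ℝ) * 4096 + l2 * x2 ≤ s3 * 4096 := by exact_mod_cast c1
  have d2 : (x2 : ℝ) * 4096 + l1 * x1 ≤ s3 * 4096 := by exact_mod_cast c2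
  have d3 : (x1 : ℝ) * 4096 + l3 * x3 ≤ s2 * 4096 := by exact_mod_cast c3
  have d4 : (x3 : ℝ) * 4096 + l1 * x1 ≤ s2 * 4096 := by exact_mod_cast c4
  have d5 : (x2 : ℝ) * 4096 + l3 * x3 ≤ s1 * 4096 := by exact_mod_cast c5
  have d6 : (x3 : ℝ) * 4096 + l2 * x2 ≤ s1 * 4096 := by exact_mod_cast c6
  have p1 : (0 : ℝ) ≤ x1 := Nat.cast_nonneg _
  have p2 : (0 : ℝ) ≤ x2 := Nat.cast_nonneg _
  have p3 : (0 : ℝ) ≤ x3 := Nat.cast_nonneg _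
  refine ⟨l1 * x1 / 16777216, l2 * x2 / 16777216, l3 * x3 / 16777216, ⟨⟨?_, ?_, ?_⟩, ?_, ?_, ?_, ?_, ?_, ?_⟩, ?_⟩
  · positivity
  · positivity
  · positivity
  · exact FEaux ha1 la1 p1 (by linarith) r3
  · exact FEaux ha1 la1 p1 (by linarith) r2
  · exact FEaux ha2 la2 p2 (by linarith) r3
  · exact FEaux ha2 la2 p2 (by linarith) r1
  · exact FEaux ha3 la3 p3 (by linarith) r2
  · exact FEaux ha3 la3 p3 (by linarith) r1
  · push_cast; ring

theorem pair_le {a b e f R : ℝ} (ha : 0 ≤ a) (ha1 : a ≤ 1) (hb : 0 ≤ b) (hb1 : b ≤ 1) (he : 0 ≤ e)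
    (h : e + a * f ≤ a * R) (h' : f + b * e ≤ b * R) (hR : 0 ≤ R) : e + f ≤ R := by
  rcases ha.eq_or_lt with h0 | h0
  · subst h0
    have : e = 0 := by linarith
    subst this
    nlinarith
  · have : a * (e + f) ≤ a * R := by nlinarith
    exact le_of_mul_le_mul_left this h0

theorem DD_bds {a1 a2 a3 : ℝ} (h : DD a1 a2 a3) :
    (0 ≤ a1 ∧ a1 ≤ 1) ∧ (0 ≤ a2 ∧ a2 ≤ 1) ∧ (0 ≤ a3 ∧ a3 ≤ 1) := by
  obtain ⟨h1, h2, h3, h4, -, -⟩ := h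
  refine ⟨⟨?_, ?_⟩, ⟨?_, ?_⟩, ⟨?_, ?_⟩⟩ <;> linarith

theorem FE_pairs {a1 a2 a3 b1 b2 b3 e1 e2 e3 : ℝ} (ha : DD a1 a2 a3) (hb : DD b1 b2 b3)
    (h : FE a1 a2 a3 b1 b2 b3 e1 e2 e3) :
    e1 + e2 ≤ 1 - b3 ∧ e1 + e3 ≤ 1 - b2 ∧ e2 + e3 ≤ 1 - b1 := by
  obtain ⟨⟨h1, h1'⟩, ⟨h2, h2'⟩, ⟨h3, h3'⟩⟩ := DD_bds ha
  obtain ⟨⟨k1, k1'⟩, ⟨k2, k2'⟩, ⟨k3, k3'⟩⟩ := DD_bds hb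
  obtain ⟨⟨q1, q2, q3⟩, c1, c2, c3, c4, c5, c6⟩ := h
  exact ⟨pair_le h1 h1' h2 h2' q1 c1 c3 (by linarith),
    pair_le h1 h1' h3 h3' q1 c2 c5 (by linarith),
    pair_le h2 h2' h3 h3' q2 c4 c6 (by linarith)⟩

theorem FE_sum {a1 a2 a3 b1 b2 b3 e1 e2 e3 : ℝ} (ha : DD a1 a2 a3) (hb : DD b1 b2 b3)
    (h : FE a1 a2 a3 b1 b2 b3 e1 e2 e3) : 1 / 2 ≤ 2 - (e1 + e2 + e3) := by
  obtain ⟨⟨k1, k1'⟩, ⟨k2, k2'⟩, ⟨k3, k3'⟩⟩ := DD_bds hb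
  obtain ⟨p1, p2, p3⟩ := FE_pairs ha hb h
  linarith

/-- a pair of parameter vectors in a box -/
def Box (al1 al2 al3 ah1 ah2 ah3 : Nat) (a1 a2 a3 : ℝ) : Prop :=
  ((al1 : ℝ) ≤ 4096 * a1 ∧ (al2 : ℝ) ≤ 4096 * a2 ∧ (al3 : ℝ) ≤ 4096 * a3) ∧
  (4096 * a1 ≤ (ah1 : ℝ) ∧ 4096 * a2 ≤ (ah2 : ℝ) ∧ 4096 * a3 ≤ (ah3 : ℝ))

theorem Ntest_sound {al1 al2 al3 ah1 ah2 ah3 bl1 bl2 bl3 bh1 bh2 bh3 : Nat}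
    (h : Ntest al1 al2 al3 ah1 ah2 ah3 bl1 bl2 bl3 bh1 bh2 bh3 = true)
    {a1 a2 a3 b1 b2 b3 : ℝ} (ha : DD a1 a2 a3) (hb : DD b1 b2 b3)
    (hA : Box al1 al2 al3 ah1 ah2 ah3 a1 a2 a3) (hB : Box bl1 bl2 bl3 bh1 bh2 bh3 b1 b2 b3) :
    NP a1 a2 a3 b1 b2 b3 := by
  simp only [Ntest, ble_eq, nmul, nsub] at h
  obtain ⟨⟨la1, la2, la3⟩, ⟨ua1, ua2, ua3⟩⟩ := hA
  obtain ⟨⟨lb1, lb2, lb3⟩, ⟨ub1, ub2, ub3⟩⟩ := hB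
  obtain ⟨⟨h1, h1'⟩, ⟨h2, h2'⟩, ⟨h3, h3'⟩⟩ := DD_bds ha
  obtain ⟨⟨k1, k1'⟩, ⟨k2, k2'⟩, ⟨k3, k3'⟩⟩ := DD_bds hb
  obtain ⟨e1, e2, e3, he, hE⟩ := NF_FE (EE_NF al1 al2 al3 bh1 bh2 bh3) h1 h2 h3 k1' k2' k3'
    la1 la2 la3 ub1 ub2 ub3
  obtain ⟨f1, f2, f3, hf, hF⟩ := NF_FE (EE_NF bl1 bl2 bl3 ah1 ah2 ah3) k1 k2 k3 h1' h2' h3'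
    lb1 lb2 lb3 ua1 ua2 ua3
  refine ⟨e1, e2, e3, f1, f2, f3, he, hf, ?_⟩
  have s1 := FE_sum ha hb he
  have s2 := FE_sum hb ha hf
  generalize EE al1 al2 al3 bh1 bh2 bh3 = E at *
  generalize EE bl1 bl2 bl3 ah1 ah2 ah3 = F at *
  have t1 : (33554432 : ℝ) ≤ ((33554432 - E : Nat) : ℝ) + E := by
    exact_mod_cast (show 33554432 ≤ (33554432 - E) + E by omega)
  have t2 : (33554432 : ℝ) ≤ ((33554432 - F : Nat) : ℝ) + F := by
    exact_mod_cast (show 33554432 ≤ (33554432 - F) + F by omega)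
  have hh : ((33554432 - E : Nat) : ℝ) * ((33554432 - F : Nat) : ℝ) * 10000
      ≤ 7357474416239837184 := by exact_mod_cast h
  generalize ((33554432 - E : Nat) : ℝ) = u at *
  generalize ((33554432 - F : Nat) : ℝ) = v at *
  have t3 : 16777216 * (2 - (e1 + e2 + e3)) ≤ u := by linarith
  have t4 : 16777216 * (2 - (f1 + f2 + f3)) ≤ v := by linarith
  have := mul_le_mul t3 t4 (by linarith) (by linarith)
  linarith

theorem gg_ge (x y : Nat) : 4096 * ((x : ℝ) + y) - 2 * (x * y) ≤ (gg x y : ℝ) := by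
  simp only [gg, nadd, nmul, nsub]
  have : (4096 : ℝ) * ((x : ℝ) + y) ≤ ((4096 * (x + y) - 2 * (x * y) : Nat) : ℝ) + 2 * (x * y) := by
    exact_mod_cast (show 4096 * (x + y) ≤ (4096 * (x + y) - 2 * (x * y)) + 2 * (x * y) by omega)
  linarith

theorem lin_le {p q l h x C : ℝ} (h1 : l ≤ x) (h2 : x ≤ h) (c1 : p + q * l ≤ C)
    (c2 : p + q * h ≤ C) : p + q * x ≤ C := by
  rcases le_total 0 q with hq | hq <;> nlinarith

theorem gm_ge {l h l' h' : Nat} {X Y : ℝ} (h1 : (l : ℝ) ≤ X) (h2 : X ≤ h) (h3 : (l' : ℝ) ≤ Y)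
    (h4 : Y ≤ h') : 4096 * (X + Y) - 2 * (X * Y) ≤ (gm l h l' h' : ℝ) := by
  have g1 := gg_ge l l'
  have g2 := gg_ge l h'
  have g3 := gg_ge h l'
  have g4 := gg_ge h h'
  simp only [gm, bc_eq, ble_eq, mx_eq]
  split_ifs with c1 c2
  · have c1' : (h : ℝ) ≤ 2048 := by exact_mod_cast c1
    have c2' : (h' : ℝ) ≤ 2048 := by exact_mod_cast c2
    nlinarith
  · have c1' : (h : ℝ) ≤ 2048 := by exact_mod_cast c1
    push_cast
    have m1 := le_max_left (gg h h' : ℝ) (gg l h' : ℝ)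
    have m2 := le_max_right (gg h h' : ℝ) (gg l h' : ℝ)
    have : 4096 * (h' : ℝ) + (4096 - 2 * h') * X ≤ max (gg h h' : ℝ) (gg l h' : ℝ) :=
      lin_le h1 h2 (by linarith) (by linarith)
    nlinarith
  · push_cast
    set C := max (max (gg l l' : ℝ) (gg l h' : ℝ)) (max (gg h l' : ℝ) (gg h h' : ℝ)) with hC
    have m1 : (gg l l' : ℝ) ≤ C := (le_max_left _ _).trans (le_max_left _ _)
    have m2 : (gg l h' : ℝ) ≤ C := (le_max_right _ _).trans (le_max_left _ _)
    have m3 : (gg h l' : ℝ) ≤ C := (le_max_left _ _).trans (le_max_right _ _)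
    have m4 : (gg h h' : ℝ) ≤ C := (le_max_right _ _).trans (le_max_right _ _)
    have k1 : 4096 * (h' : ℝ) + (4096 - 2 * h') * X ≤ C :=
      lin_le h1 h2 (by linarith) (by linarith)
    have k2 : 4096 * (l' : ℝ) + (4096 - 2 * l') * X ≤ C :=
      lin_le h1 h2 (by linarith) (by linarith)
    have k3 : 4096 * X + (4096 - 2 * X) * Y ≤ C :=
      lin_le h3 h4 (by linarith) (by linarith)
    linarith

theorem q_nonneg {x y : ℝ} (hx : 0 ≤ x) (hx' : x ≤ 1) (hy : 0 ≤ y) (hy' : y ≤ 1) :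
    0 ≤ x + y - 2 * (x * y) := by
  nlinarith

theorem F_id {a1 a2 a3 b1 b2 b3 K Q : ℝ}
    (hK : (16777216 * (2 + (a1 + b1 - 2 * (a1 * b1)) + (a2 + b2 - 2 * (a2 * b2))
      + (a3 + b3 - 2 * (a3 * b3)))) * (16777216 * (2 + (a1 + b1 - 2 * (a1 * b1)) +
      (a2 + b2 - 2 * (a2 * b2)) + (a3 + b3 - 2 * (a3 * b3)))) ≤ K)
    (hQ : Q ≤ (16777216 * ((a1 + a2 + a3) - (b1 + b2 + b3))) ^ 2)
    (hh : K * 10000 ≤ 29429897664959348736 + Q * 10000) : FP a1 a2 a3 b1 b2 b3 := by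
  unfold FP
  linarith

theorem Ftest_sound {al1 al2 al3 ah1 ah2 ah3 bl1 bl2 bl3 bh1 bh2 bh3 : Nat}
    (h : Ftest al1 al2 al3 ah1 ah2 ah3 bl1 bl2 bl3 bh1 bh2 bh3 = true)
    {a1 a2 a3 b1 b2 b3 : ℝ} (ha : DD a1 a2 a3) (hb : DD b1 b2 b3)
    (hA : Box al1 al2 al3 ah1 ah2 ah3 a1 a2 a3) (hB : Box bl1 bl2 bl3 bh1 bh2 bh3 b1 b2 b3) :
    FP a1 a2 a3 b1 b2 b3 := by
  simp only [Ftest, ble_eq, nmul, nsub, nadd, fz_eq, mx_eq] at h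
  obtain ⟨⟨la1, la2, la3⟩, ⟨ua1, ua2, ua3⟩⟩ := hA
  obtain ⟨⟨lb1, lb2, lb3⟩, ⟨ub1, ub2, ub3⟩⟩ := hB
  obtain ⟨⟨h1, h1'⟩, ⟨h2, h2'⟩, ⟨h3, h3'⟩⟩ := DD_bds ha
  obtain ⟨⟨k1, k1'⟩, ⟨k2, k2'⟩, ⟨k3, k3'⟩⟩ := DD_bds hb
  have g1 := gm_ge la1 ua1 lb1 ub1
  have g2 := gm_ge la2 ua2 lb2 ub2
  have g3 := gm_ge la3 ua3 lb3 ub3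
  generalize gm al1 ah1 bl1 bh1 = G1 at *
  generalize gm al2 ah2 bl2 bh2 = G2 at *
  generalize gm al3 ah3 bl3 bh3 = G3 at *
  obtain ⟨K, hK⟩ : ∃ K, K = 33554432 + (G1 + G2 + G3) := ⟨_, rfl⟩
  obtain ⟨D, hD⟩ : ∃ D, D = 4096 * max (al1 + al2 + al3 - (bh1 + bh2 + bh3)) (bl1 + bl2 + bl3 - (ah1 + ah2 + ah3)) := ⟨_, rfl⟩
  rw [← hK, ← hD] at h
  have hK' : (K : ℝ) = 33554432 + (G1 + G2 + G3) := by exact_mod_cast hK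
  have hh : (K : ℝ) * K * 10000 ≤ 29429897664959348736 + D * D * 10000 := by exact_mod_cast h
  have hDs : (D : ℝ) * D ≤ (16777216 * ((a1 + a2 + a3) - (b1 + b2 + b3))) ^ 2 := by
    rw [← sq]
    have hD0 : (0 : ℝ) ≤ D := Nat.cast_nonneg _
    have hD1 : D = 0 ∨ D + 4096 * (bh1 + bh2 + bh3) = 4096 * (al1 + al2 + al3) ∨
        D + 4096 * (ah1 + ah2 + ah3) = 4096 * (bl1 + bl2 + bl3) := by omega
    rcases hD1 with hd | hd | hd
    · rw [hd]; simp only [Nat.cast_zero, ne_eq, OfNat.ofNat_ne_zero, not_false_eq_true, zero_pow]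
      exact sq_nonneg _
    · have hd' : (D : ℝ) + 4096 * (bh1 + bh2 + bh3) = 4096 * (al1 + al2 + al3) := by
        exact_mod_cast hd
      exact pow_le_pow_left₀ hD0 (by linarith) 2
    · have hd' : (D : ℝ) + 4096 * (ah1 + ah2 + ah3) = 4096 * (bl1 + bl2 + bl3) := by
        exact_mod_cast hd
      rw [← neg_sq (16777216 * _)]
      exact pow_le_pow_left₀ hD0 (by linarith) 2
  have q1 : 0 ≤ a1 + b1 - 2 * (a1 * b1) := q_nonneg h1 h1' k1 k1'
  have q2 : 0 ≤ a2 + b2 - 2 * (a2 * b2) := q_nonneg h2 h2' k2 k2'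
  have q3 : 0 ≤ a3 + b3 - 2 * (a3 * b3) := q_nonneg h3 h3' k3 k3'
  have hKK : 16777216 * (2 + (a1 + b1 - 2 * (a1 * b1)) + (a2 + b2 - 2 * (a2 * b2))
    + (a3 + b3 - 2 * (a3 * b3))) ≤ K := by rw [hK']; linarith
  have hK2 := mul_le_mul hKK hKK (by linarith) (Nat.cast_nonneg K)
  exact F_id hK2 hDs hh

end BM

namespace BM

theorem an_true {x y : Bool} (h : an x y = true) : x = true ∧ y = true := by
  cases x <;> cases y <;> simp_all [an, bc]

def Good (ih : Ch) : Prop := ∀ (al1 al2 al3 ah1 ah2 ah3 bl1 bl2 bl3 bh1 bh2 bh3 : Nat),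
  ih al1 al2 al3 ah1 ah2 ah3 bl1 bl2 bl3 bh1 bh2 bh3 = true →
  ∀ {a1 a2 a3 b1 b2 b3 : ℝ}, DD a1 a2 a3 → DD b1 b2 b3 → b1 ≤ a1 →
  Box al1 al2 al3 ah1 ah2 ah3 a1 a2 a3 → Box bl1 bl2 bl3 bh1 bh2 bh3 b1 b2 b3 →
  FP a1 a2 a3 b1 b2 b3 ∨ NP a1 a2 a3 b1 b2 b3

theorem Good_split {ih : Ch} (hi : Good ih) (w1 w2 w3 v1 v2 v3 m : Nat) :
    Good (split ih w1 w2 w3 v1 v2 v3 m) := by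
  intro al1 al2 al3 ah1 ah2 ah3 bl1 bl2 bl3 bh1 bh2 bh3 h a1 a2 a3 b1 b2 b3 ha hb hab hA hB
  have hA' := hA
  have hB' := hB
  obtain ⟨⟨la1, la2, la3⟩, ⟨ua1, ua2, ua3⟩⟩ := hA'
  obtain ⟨⟨lb1, lb2, lb3⟩, ⟨ub1, ub2, ub3⟩⟩ := hB'
  simp only [split, bc_eq, fz_eq] at h
  split_ifs at h
  · obtain ⟨h1, h2⟩ := an_true h
    rcases le_total (4096 * a2) (((al2 +ₙ ah2) /ₙ 2 : Nat) : ℝ) with hc | hc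
    · exact hi _ _ _ _ _ _ _ _ _ _ _ _ h1 ha hb hab ⟨⟨la1, la2, la3⟩, ⟨ua1, hc, ua3⟩⟩ hB
    · exact hi _ _ _ _ _ _ _ _ _ _ _ _ h2 ha hb hab ⟨⟨la1, hc, la3⟩, ⟨ua1, ua2, ua3⟩⟩ hB
  · obtain ⟨h1, h2⟩ := an_true h
    rcases le_total (4096 * b2) (((bl2 +ₙ bh2) /ₙ 2 : Nat) : ℝ) with hc | hc
    · exact hi _ _ _ _ _ _ _ _ _ _ _ _ h1 ha hb hab hA ⟨⟨lb1, lb2, lb3⟩, ⟨ub1, hc, ub3⟩⟩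
    · exact hi _ _ _ _ _ _ _ _ _ _ _ _ h2 ha hb hab hA ⟨⟨lb1, hc, lb3⟩, ⟨ub1, ub2, ub3⟩⟩
  · obtain ⟨h1, h2⟩ := an_true h
    rcases le_total (4096 * a1) (((al1 +ₙ ah1) /ₙ 2 : Nat) : ℝ) with hc | hc
    · exact hi _ _ _ _ _ _ _ _ _ _ _ _ h1 ha hb hab ⟨⟨la1, la2, la3⟩, ⟨hc, ua2, ua3⟩⟩ hB
    · exact hi _ _ _ _ _ _ _ _ _ _ _ _ h2 ha hb hab ⟨⟨hc, la2, la3⟩, ⟨ua1, ua2, ua3⟩⟩ hB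
  · obtain ⟨h1, h2⟩ := an_true h
    rcases le_total (4096 * b1) (((bl1 +ₙ bh1) /ₙ 2 : Nat) : ℝ) with hc | hc
    · exact hi _ _ _ _ _ _ _ _ _ _ _ _ h1 ha hb hab hA ⟨⟨lb1, lb2, lb3⟩, ⟨hc, ub2, ub3⟩⟩
    · exact hi _ _ _ _ _ _ _ _ _ _ _ _ h2 ha hb hab hA ⟨⟨hc, lb2, lb3⟩, ⟨ub1, ub2, ub3⟩⟩
  · obtain ⟨h1, h2⟩ := an_true h
    rcases le_total (4096 * a3) (((al3 +ₙ ah3) /ₙ 2 : Nat) : ℝ) with hc | hc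
    · exact hi _ _ _ _ _ _ _ _ _ _ _ _ h1 ha hb hab ⟨⟨la1, la2, la3⟩, ⟨ua1, ua2, hc⟩⟩ hB
    · exact hi _ _ _ _ _ _ _ _ _ _ _ _ h2 ha hb hab ⟨⟨la1, la2, hc⟩, ⟨ua1, ua2, ua3⟩⟩ hB
  · obtain ⟨h1, h2⟩ := an_true h
    rcases le_total (4096 * b3) (((bl3 +ₙ bh3) /ₙ 2 : Nat) : ℝ) with hc | hc
    · exact hi _ _ _ _ _ _ _ _ _ _ _ _ h1 ha hb hab hA ⟨⟨lb1, lb2, lb3⟩, ⟨ub1, ub2, hc⟩⟩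
    · exact hi _ _ _ _ _ _ _ _ _ _ _ _ h2 ha hb hab hA ⟨⟨lb1, lb2, hc⟩, ⟨ub1, ub2, ub3⟩⟩

theorem emp_sound {l1 l2 l3 h1 h2 h3 : Nat} (h : emp l1 l2 l3 h1 h2 h3 = true)
    {a1 a2 a3 : ℝ} (ha : DD a1 a2 a3) (hA : Box l1 l2 l3 h1 h2 h3 a1 a2 a3) : False := by
  obtain ⟨⟨la1, la2, la3⟩, ⟨ua1, ua2, ua3⟩⟩ := hA
  obtain ⟨-, -, -, -, c1, c2⟩ := ha
  have n1 : (0 : ℝ) ≤ l1 := Nat.cast_nonneg _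
  have n2 : (0 : ℝ) ≤ l2 := Nat.cast_nonneg _
  have n3 : (0 : ℝ) ≤ l3 := Nat.cast_nonneg _
  simp only [emp, bc_eq, ble_eq, nadd, nmul] at h
  split_ifs at h with c1 c2 c3 c4 c5
  · apply c5
    have := mul_le_mul (add_le_add la2 la3) (add_le_add_right la1 4096)
      (by positivity) (by linarith)
    have : ((l2 : ℝ) + l3) * (4096 + l1) ≤ 16777216 := by linarith
    exact_mod_cast this
  · apply c4
    have := mul_le_mul la1 (add_le_add_right la2 4096)
      (by positivity) (by linarith)
    have : (l1 : ℝ) * (4096 + l2) ≤ 16777216 := by linarith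
    exact_mod_cast this
  · exact c3 (by exact_mod_cast la3.trans ua3)
  · exact c2 (by exact_mod_cast la2.trans ua2)
  · exact c1 (by exact_mod_cast la1.trans ua1)

theorem Good_tests {ih : Ch} (hi : Good ih) : Good (tests ih) := by
  intro al1 al2 al3 ah1 ah2 ah3 bl1 bl2 bl3 bh1 bh2 bh3 h a1 a2 a3 b1 b2 b3 ha hb hab hA hB
  simp only [tests, bc_eq, ble_eq, split0, fz_eq] at h
  split_ifs at h with c1 c2 c3 c4 c5
  · exact (emp_sound c1 ha hA).elim
  · exact (emp_sound c2 hb hB).elim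
  · exact Or.inl (Ftest_sound c4 ha hb hA hB)
  · exact Or.inr (Ntest_sound c5 ha hb hA hB)
  · exact Good_split hi _ _ _ _ _ _ _ _ _ _ _ _ _ _ _ _ _ _ _ h ha hb hab hA hB
  · exact (c3 (by exact_mod_cast (by linarith [hA.2.1, hB.1.1] : (bl1 : ℝ) ≤ ah1))).elim

theorem Box_tight {l1 l2 l3 h1 h2 h3 : Nat} {a1 a2 a3 : ℝ} (ha : DD a1 a2 a3)
    (hA : Box l1 l2 l3 h1 h2 h3 a1 a2 a3) :
    Box (max l1 (max l2 l3)) (max l2 l3) l3 h1 (min h2 h1) (min h3 (min h2 h1)) a1 a2 a3 := by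
  obtain ⟨⟨la1, la2, la3⟩, ⟨ua1, ua2, ua3⟩⟩ := hA
  obtain ⟨d1, d2, d3, d4, -, -⟩ := ha
  have e2 : ((max l2 l3 : Nat) : ℝ) ≤ 4096 * a2 := by
    push_cast; exact max_le la2 (by linarith)
  have f2 : 4096 * a2 ≤ ((min h2 h1 : Nat) : ℝ) := by
    push_cast; exact le_min ua2 (by linarith)
  refine ⟨⟨?_, e2, la3⟩, ⟨ua1, f2, ?_⟩⟩
  · rw [Nat.cast_max]; exact max_le la1 (by linarith)
  · rw [Nat.cast_min]; exact le_min ua3 (by linarith)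

theorem Good_tightA {ih : Ch} (hi : Good ih) : Good (tightA ih) := by
  intro al1 al2 al3 ah1 ah2 ah3 bl1 bl2 bl3 bh1 bh2 bh3 h a1 a2 a3 b1 b2 b3 ha hb hab hA hB
  simp only [tightA, tightB, fz_eq, mx_eq, mn_eq] at h
  exact Good_tests hi _ _ _ _ _ _ _ _ _ _ _ _ h ha hb hab (Box_tight ha hA) (Box_tight hb hB)

theorem Good_chk (n : Nat) : Good (chk n) := by
  induction n with
  | zero => intro _ _ _ _ _ _ _ _ _ _ _ _ h; cases h
  | succ n ih => exact Good_tightA ih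

theorem Box_unit {a1 a2 a3 : ℝ} (ha : DD a1 a2 a3) : Box 0 0 0 4096 4096 4096 a1 a2 a3 := by
  obtain ⟨⟨h1, h1'⟩, ⟨h2, h2'⟩, ⟨h3, h3'⟩⟩ := DD_bds ha
  refine ⟨⟨?_, ?_, ?_⟩, ?_, ?_, ?_⟩ <;> push_cast <;> linarith

theorem chk_all : chk 45 0 0 0 4096 4096 4096 0 0 0 4096 4096 4096 = true := by
  decide +kernel

theorem six {a1 a2 a3 b1 b2 b3 : ℝ} (ha : DD a1 a2 a3) (hb : DD b1 b2 b3) :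
    FP a1 a2 a3 b1 b2 b3 ∨ NP a1 a2 a3 b1 b2 b3 := by
  rcases le_total b1 a1 with h | h
  · exact Good_chk 45 _ _ _ _ _ _ _ _ _ _ _ _ chk_all ha hb h (Box_unit ha) (Box_unit hb)
  · rcases Good_chk 45 _ _ _ _ _ _ _ _ _ _ _ _ chk_all hb ha h (Box_unit hb) (Box_unit ha)
      with h | ⟨e1, e2, e3, f1, f2, f3, he, hf, h⟩
    · left; unfold FP at *; rw [mul_comm]; exact h
    · right; exact ⟨f1, f2, f3, e1, e2, e3, hf, he, by rw [mul_comm]; exact h⟩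

end BM

namespace BM

/-- twice the signed area of a triangle -/
def dt (p q r : ℝ × ℝ) : ℝ := (q.1 - p.1) * (r.2 - p.2) - (q.2 - p.2) * (r.1 - p.1)

/-- the point with given barycentric coordinates -/
def cb (e1 e2 e3 : ℝ × ℝ) (x1 x2 x3 : ℝ) : ℝ × ℝ := x1 • e1 + x2 • e2 + x3 • e3

theorem dt_cb (e1 e2 e3 : ℝ × ℝ) {x1 x2 x3 y1 y2 y3 z1 z2 z3 : ℝ} (hx : x1 + x2 + x3 = 1)
    (hy : y1 + y2 + y3 = 1) (hz : z1 + z2 + z3 = 1) :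
    dt (cb e1 e2 e3 x1 x2 x3) (cb e1 e2 e3 y1 y2 y3) (cb e1 e2 e3 z1 z2 z3) =
    (x1 * (y2 * z3 - y3 * z2) - x2 * (y1 * z3 - y3 * z1) + x3 * (y1 * z2 - y2 * z1)) *
      dt e1 e2 e3 := by
  obtain rfl : x3 = 1 - x1 - x2 := by linarith
  obtain rfl : y3 = 1 - y1 - y2 := by linarith
  obtain rfl : z3 = 1 - z1 - z2 := by linarith
  simp only [dt, cb, Prod.fst_add, Prod.snd_add, Prod.smul_fst, Prod.smul_snd, smul_eq_mul]
  ring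

structure Pre (A : Set (ℝ × ℝ)) (e1 e2 e3 : ℝ × ℝ) (a1 a2 a3 : ℝ) : Prop where
  m1 : e1 ∈ A
  m2 : e2 ∈ A
  m3 : e3 ∈ A
  ne : dt e1 e2 e3 ≠ 0
  mxm : ∀ p ∈ A, ∀ q ∈ A, ∀ r ∈ A, |dt p q r| ≤ |dt e1 e2 e3|
  n1 : 0 ≤ a1
  n2 : 0 ≤ a2
  n3 : 0 ≤ a3
  co : ∀ p ∈ A, ∃ x1 x2 x3 : ℝ, x1 + x2 + x3 = 1 ∧ p = cb e1 e2 e3 x1 x2 x3 ∧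
    -a1 ≤ x1 ∧ -a2 ≤ x2 ∧ -a3 ≤ x3
  p1 : ∃ s t : ℝ, s + t = 1 + a1 ∧ cb e1 e2 e3 (-a1) s t ∈ A
  p2 : ∃ s t : ℝ, s + t = 1 + a2 ∧ cb e1 e2 e3 s (-a2) t ∈ A
  p3 : ∃ s t : ℝ, s + t = 1 + a3 ∧ cb e1 e2 e3 s t (-a3) ∈ A

theorem Pre.swap12 {A : Set (ℝ × ℝ)} {e1 e2 e3 : ℝ × ℝ} {a1 a2 a3 : ℝ}
    (h : Pre A e1 e2 e3 a1 a2 a3) : Pre A e2 e1 e3 a2 a1 a3 := by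
  have hd : dt e2 e1 e3 = - dt e1 e2 e3 := by simp only [dt]; ring
  have hc : ∀ x1 x2 x3, cb e2 e1 e3 x2 x1 x3 = cb e1 e2 e3 x1 x2 x3 := by
    intro x1 x2 x3; simp only [cb]; abel
  refine ⟨h.m2, h.m1, h.m3, by rw [hd]; exact neg_ne_zero.2 h.ne, ?_, h.n2, h.n1, h.n3, ?_, ?_, ?_, ?_⟩
  · rw [hd, abs_neg]; exact h.mxm
  · intro p hp
    obtain ⟨x1, x2, x3, hx, he, h1, h2, h3⟩ := h.co p hp
    exact ⟨x2, x1, x3, by linarith, by rw [hc]; exact he, h2, h1, h3⟩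
  · obtain ⟨s, t, hs, hm⟩ := h.p2
    exact ⟨s, t, hs, by rw [hc]; exact hm⟩
  · obtain ⟨s, t, hs, hm⟩ := h.p1
    exact ⟨s, t, hs, by rw [hc]; exact hm⟩
  · obtain ⟨s, t, hs, hm⟩ := h.p3
    exact ⟨t, s, by linarith, by rw [hc]; exact hm⟩

theorem Pre.swap23 {A : Set (ℝ × ℝ)} {e1 e2 e3 : ℝ × ℝ} {a1 a2 a3 : ℝ}
    (h : Pre A e1 e2 e3 a1 a2 a3) : Pre A e1 e3 e2 a1 a3 a2 := by
  have hd : dt e1 e3 e2 = - dt e1 e2 e3 := by simp only [dt]; ring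
  have hc : ∀ x1 x2 x3, cb e1 e3 e2 x1 x3 x2 = cb e1 e2 e3 x1 x2 x3 := by
    intro x1 x2 x3; simp only [cb]; abel
  refine ⟨h.m1, h.m3, h.m2, by rw [hd]; exact neg_ne_zero.2 h.ne, ?_, h.n1, h.n3, h.n2, ?_, ?_, ?_, ?_⟩
  · rw [hd, abs_neg]; exact h.mxm
  · intro p hp
    obtain ⟨x1, x2, x3, hx, he, h1, h2, h3⟩ := h.co p hp
    exact ⟨x1, x3, x2, by linarith, by rw [hc]; exact he, h1, h3, h2⟩
  · obtain ⟨s, t, hs, hm⟩ := h.p1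
    exact ⟨t, s, by linarith, by rw [hc]; exact hm⟩
  · obtain ⟨s, t, hs, hm⟩ := h.p3
    exact ⟨s, t, hs, by rw [hc]; exact hm⟩
  · obtain ⟨s, t, hs, hm⟩ := h.p2
    exact ⟨s, t, hs, by rw [hc]; exact hm⟩

theorem Pre.sort {A : Set (ℝ × ℝ)} {e1 e2 e3 : ℝ × ℝ} {a1 a2 a3 : ℝ}
    (h : Pre A e1 e2 e3 a1 a2 a3) : ∃ e1 e2 e3 a1 a2 a3, Pre A e1 e2 e3 a1 a2 a3 ∧
      a2 ≤ a1 ∧ a3 ≤ a2 := by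
  rcases le_total a2 a1 with h1 | h1 <;> rcases le_total a3 a2 with h2 | h2 <;>
    rcases le_total a3 a1 with h3 | h3
  · exact ⟨_, _, _, _, _, _, h, h1, h2⟩
  · exact ⟨_, _, _, _, _, _, h, h1, h2⟩
  · exact ⟨_, _, _, _, _, _, h.swap23, h3, h2⟩
  · exact ⟨_, _, _, _, _, _, h.swap23.swap12, h3, h1⟩
  · exact ⟨_, _, _, _, _, _, h.swap12, h1, h3⟩
  · exact ⟨_, _, _, _, _, _, h.swap12.swap23, h2, h3⟩
  · exact ⟨_, _, _, _, _, _, h.swap12.swap23.swap12, h2, h1⟩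
  · exact ⟨_, _, _, _, _, _, h.swap12.swap23.swap12, h2, h1⟩

theorem Pre.bnd {A : Set (ℝ × ℝ)} {e1 e2 e3 : ℝ × ℝ} {a1 a2 a3 : ℝ}
    (h : Pre A e1 e2 e3 a1 a2 a3) {x1 x2 x3 y1 y2 y3 z1 z2 z3 : ℝ} (hx : x1 + x2 + x3 = 1)
    (hy : y1 + y2 + y3 = 1) (hz : z1 + z2 + z3 = 1) (mx : cb e1 e2 e3 x1 x2 x3 ∈ A)
    (my : cb e1 e2 e3 y1 y2 y3 ∈ A) (mz : cb e1 e2 e3 z1 z2 z3 ∈ A) :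
    |x1 * (y2 * z3 - y3 * z2) - x2 * (y1 * z3 - y3 * z1) + x3 * (y1 * z2 - y2 * z1)| ≤ 1 := by
  have h1 := h.mxm _ mx _ my _ mz
  rw [dt_cb e1 e2 e3 hx hy hz, abs_mul] at h1
  have h2 : 0 < |dt e1 e2 e3| := abs_pos.2 h.ne
  exact le_of_mul_le_mul_right (by linarith) h2

theorem cb_100 (e1 e2 e3 : ℝ × ℝ) : cb e1 e2 e3 1 0 0 = e1 := by simp [cb]
theorem cb_010 (e1 e2 e3 : ℝ × ℝ) : cb e1 e2 e3 0 1 0 = e2 := by simp [cb]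
theorem cb_001 (e1 e2 e3 : ℝ × ℝ) : cb e1 e2 e3 0 0 1 = e3 := by simp [cb]

theorem Pre.abs1 {A : Set (ℝ × ℝ)} {e1 e2 e3 : ℝ × ℝ} {a1 a2 a3 : ℝ}
    (h : Pre A e1 e2 e3 a1 a2 a3) {x1 x2 x3 : ℝ} (hx : x1 + x2 + x3 = 1)
    (mx : cb e1 e2 e3 x1 x2 x3 ∈ A) : |x1| ≤ 1 ∧ |x2| ≤ 1 ∧ |x3| ≤ 1 := by
  have m1 : cb e1 e2 e3 1 0 0 ∈ A := by rw [cb_100]; exact h.m1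
  have m2 : cb e1 e2 e3 0 1 0 ∈ A := by rw [cb_010]; exact h.m2
  have m3 : cb e1 e2 e3 0 0 1 ∈ A := by rw [cb_001]; exact h.m3
  have k1 := h.bnd hx (by norm_num) (by norm_num) mx m2 m3
  have k2 := h.bnd hx (by norm_num) (by norm_num) mx m3 m1
  have k3 := h.bnd hx (by norm_num) (by norm_num) mx m1 m2
  ring_nf at k1 k2 k3
  exact ⟨k1, k2, k3⟩

/-- the key inequality for the three extreme points -/
theorem key3 {a1 a2 a3 x y z : ℝ} (h21 : a2 ≤ a1) (h32 : a3 ≤ a2) (h3 : 0 ≤ a3)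
    (hx : x ≤ 1) (hx' : a1 ≤ x) (hy : y ≤ 1) (hy' : a2 ≤ y) (hz : z ≤ 1) (hz' : a3 ≤ z)
    (hd : (a2 + a3) * (1 + a1) + (1 - y) * (x - a3) + (1 - z) * (1 + a1 - x - a2)
      - (1 - y) * (1 - z) ≤ 1) : (a2 + a3) * (1 + a1) ≤ 1 := by
  by_contra hc
  push Not at hc
  have u1 : 0 ≤ x - a3 := by linarith
  have u2 : 0 ≤ 1 + a1 - x - a2 := by linarith
  have hy0 : 0 ≤ 1 - y := by linarith
  have hz0 : 0 ≤ 1 - z := by linarith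
  have w1 : 1 + a1 - x - a2 < 1 - y := by
    by_contra hn
    push Not at hn
    nlinarith [mul_nonneg hy0 u1, mul_le_mul_of_nonneg_right hn hz0]
  have w2 : x - a3 < 1 - z := by
    by_contra hn
    push Not at hn
    nlinarith [mul_nonneg hz0 u2, mul_le_mul_of_nonneg_left hn hy0]
  have w3 := mul_le_mul (show (1 - y) - (1 + a1 - x - a2) ≤ x - a1 by linarith)
    (show (1 - z) - (x - a3) ≤ 1 - x by linarith) (by linarith) (by linarith)
  nlinarith [mul_nonneg (sub_nonneg.2 h21) (show 0 ≤ 1 - a3 by linarith),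
    mul_nonneg (sub_nonneg.2 h32) (sub_nonneg.2 hx)]

theorem Pre.DD {A : Set (ℝ × ℝ)} {e1 e2 e3 : ℝ × ℝ} {a1 a2 a3 : ℝ}
    (h : Pre A e1 e2 e3 a1 a2 a3) (h21 : a2 ≤ a1) (h32 : a3 ≤ a2) : DD a1 a2 a3 := by
  obtain ⟨s1, t1, hs1, q1⟩ := h.p1
  obtain ⟨s2, t2, hs2, q2⟩ := h.p2
  obtain ⟨s3, t3, hs3, q3⟩ := h.p3
  have m2 : cb e1 e2 e3 0 1 0 ∈ A := by rw [cb_010]; exact h.m2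
  obtain ⟨b1, b2, b3⟩ := h.abs1 (by linarith) q1
  obtain ⟨c1, c2, c3⟩ := h.abs1 (by linarith) q2
  obtain ⟨d1, d2, d3⟩ := h.abs1 (by linarith) q3
  have k1 := (abs_le.1 (h.bnd (by linarith) (by linarith) (by norm_num) q1 q2 m2)).2
  have k2 := (abs_le.1 (h.bnd (by linarith) (by linarith) (by linarith) q1 q2 q3)).2
  rw [abs_neg] at b1 c2 d3
  rw [abs_le] at *
  have n3 := h.n3
  obtain rfl : t1 = 1 + a1 - s1 := by linarith
  obtain rfl : t2 = 1 + a2 - s2 := by linarith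
  obtain rfl : t3 = 1 + a3 - s3 := by linarith
  refine ⟨by linarith, h21, h32, n3, ?_, ?_⟩
  · nlinarith [mul_nonneg (sub_nonneg.2 b2.2) (by linarith : 0 ≤ s2)]
  · exact key3 (x := s1) (y := s2) (z := s3) h21 h32 n3 (by linarith) (by linarith) (by linarith) (by linarith)
      (by linarith) (by linarith) (by linarith)

theorem conv3 {A : Set (ℝ × ℝ)} (hA : Convex ℝ A) {e1 e2 e3 : ℝ × ℝ} (m1 : e1 ∈ A) (m2 : e2 ∈ A)
    (m3 : e3 ∈ A) {z1 z2 z3 : ℝ} (h1 : 0 ≤ z1) (h2 : 0 ≤ z2) (h3 : 0 ≤ z3)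
    (hz : z1 + z2 + z3 = 1) : cb e1 e2 e3 z1 z2 z3 ∈ A := by
  have := hA.sum_mem (t := (Finset.univ : Finset (Fin 3))) (w := ![z1, z2, z3]) (z := ![e1, e2, e3])
    (by intro i _; fin_cases i <;> simpa) (by simp [Fin.sum_univ_three, hz])
    (by intro i _; fin_cases i <;> simpa)
  simpa [Fin.sum_univ_three, cb] using this

theorem mem_aux {A : Set (ℝ × ℝ)} (hA : Convex ℝ A) {e1 e2 e3 : ℝ × ℝ} {a1 a2 a3 : ℝ}
    (h : Pre A e1 e2 e3 a1 a2 a3) {z1 z2 z3 : ℝ}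
    (hz : z1 + z2 + z3 = 1) (hn : z1 < 0) (c1 : 0 ≤ z1 + a1 * z2) (c2 : 0 ≤ z1 + a1 * z3) :
    cb e1 e2 e3 z1 z2 z3 ∈ A := by
  obtain ⟨s, t, hs, q⟩ := h.p1
  obtain ⟨b1, b2, b3⟩ := h.abs1 (by linarith) q
  rw [abs_le] at b1 b2 b3
  have ha : 0 < a1 := by
    rcases h.n1.eq_or_lt with h0 | h0
    · rw [← h0] at c1; linarith
    · exact h0
  obtain ⟨u, hu⟩ : ∃ u, u = -z1 / a1 := ⟨_, rfl⟩
  have hu' : u * a1 = -z1 := by rw [hu]; field_simp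
  have hu0 : 0 ≤ u := by rw [hu]; exact div_nonneg (by linarith) ha.le
  have g2 : u ≤ z2 := by rw [hu, div_le_iff₀ ha]; linarith
  have g3 : u ≤ z3 := by rw [hu, div_le_iff₀ ha]; linarith
  have := conv3 hA q h.m2 h.m3 (z1 := u) (z2 := z2 - u * s) (z3 := z3 - u * t) hu0
    (by nlinarith) (by nlinarith) (by nlinarith)
  convert this using 1
  obtain rfl : z1 = - (u * a1) := by linarith
  simp only [cb]
  module

theorem Pre.mem {A : Set (ℝ × ℝ)} (hA : Convex ℝ A) {e1 e2 e3 : ℝ × ℝ} {a1 a2 a3 : ℝ}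
    (h : Pre A e1 e2 e3 a1 a2 a3) {z1 z2 z3 : ℝ} (hz : z1 + z2 + z3 = 1)
    (c12 : 0 ≤ z1 + a1 * z2) (c13 : 0 ≤ z1 + a1 * z3) (c21 : 0 ≤ z2 + a2 * z1)
    (c23 : 0 ≤ z2 + a2 * z3) (c31 : 0 ≤ z3 + a3 * z1) (c32 : 0 ≤ z3 + a3 * z2) :
    cb e1 e2 e3 z1 z2 z3 ∈ A := by
  rcases lt_or_ge z1 0 with h1 | h1
  · exact mem_aux hA h hz h1 c12 c13
  rcases lt_or_ge z2 0 with h2 | h2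
  · have := mem_aux hA h.swap12 (z1 := z2) (z2 := z1) (z3 := z3) (by linarith) h2 c21 c23
    convert this using 1
    simp only [cb]; abel
  rcases lt_or_ge z3 0 with h3 | h3
  · have := mem_aux hA h.swap23.swap12 (z1 := z3) (z2 := z1) (z3 := z2) (by linarith) h3 c31 c32
    convert this using 1
    simp only [cb]; abel
  exact conv3 hA h.m1 h.m2 h.m3 h1 h2 h3 hz

theorem dt_cont : Continuous (fun x : (ℝ × ℝ) × (ℝ × ℝ) × (ℝ × ℝ) => |dt x.1 x.2.1 x.2.2|) := by
  unfold dt; fun_prop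

theorem cb_of_dt (e1 e2 e3 p : ℝ × ℝ) (h : dt e1 e2 e3 ≠ 0) :
    p = cb e1 e2 e3 (dt p e2 e3 / dt e1 e2 e3) (dt e1 p e3 / dt e1 e2 e3)
      (dt e1 e2 p / dt e1 e2 e3) := by
  have h1 : dt e1 e2 e3 • p = dt p e2 e3 • e1 + dt e1 p e3 • e2 + dt e1 e2 p • e3 := by
    ext
    · simp only [dt, Prod.fst_add, Prod.smul_fst, smul_eq_mul]; ring
    · simp only [dt, Prod.snd_add, Prod.smul_snd, smul_eq_mul]; ring
  have h2 : p = (dt e1 e2 e3)⁻¹ • (dt e1 e2 e3 • p) := by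
    rw [smul_smul, inv_mul_cancel₀ h, one_smul]
  rw [h1] at h2
  refine h2.trans ?_
  simp only [cb, div_eq_inv_mul]
  module

theorem dt_sum (e1 e2 e3 p : ℝ × ℝ) (h : dt e1 e2 e3 ≠ 0) :
    dt p e2 e3 / dt e1 e2 e3 + dt e1 p e3 / dt e1 e2 e3 + dt e1 e2 p / dt e1 e2 e3 = 1 := by
  rw [← add_div, ← add_div, div_eq_one_iff_eq h]
  simp only [dt]; ring

theorem exists_Pre {A : Set (ℝ × ℝ)} (hc : IsCompact A) (hi : (interior A).Nonempty) :
    ∃ e1 e2 e3 a1 a2 a3, Pre A e1 e2 e3 a1 a2 a3 := by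
  obtain ⟨c, hci⟩ := hi
  obtain ⟨r, hr, hb⟩ := Metric.isOpen_iff.1 isOpen_interior c hci
  have hb' : Metric.ball c r ⊆ A := hb.trans interior_subset
  have k0 : c ∈ A := hb' (Metric.mem_ball_self hr)
  have k1 : (c.1 + r / 2, c.2) ∈ A := by
    apply hb'
    simp [Metric.mem_ball, Prod.dist_eq, abs_of_pos hr, hr]
  have k2 : (c.1, c.2 + r / 2) ∈ A := by
    apply hb'
    simp [Metric.mem_ball, Prod.dist_eq, abs_of_pos hr, hr]
  obtain ⟨⟨e1, e2, e3⟩, ⟨m1, m2, m3⟩, hm⟩ := (hc.prod (hc.prod hc)).exists_isMaxOn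
    ⟨(c, c, c), k0, k0, k0⟩ dt_cont.continuousOn
  simp only at m1 m2 m3
  have hmx : ∀ p ∈ A, ∀ q ∈ A, ∀ r ∈ A, |dt p q r| ≤ |dt e1 e2 e3| :=
    fun p hp q hq r hr => hm (a := (p, q, r)) ⟨hp, hq, hr⟩
  have hne : dt e1 e2 e3 ≠ 0 := by
    have h1 := hmx _ k0 _ k1 _ k2
    intro h0
    rw [h0] at h1
    have : dt c (c.1 + r / 2, c.2) (c.1, c.2 + r / 2) = r ^ 2 / 4 := by simp only [dt]; ring
    rw [this, abs_zero, abs_of_pos (by positivity)] at h1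
    have : 0 < r ^ 2 / 4 := by positivity
    linarith
  have f1 : Continuous (fun p => dt p e2 e3 / dt e1 e2 e3) := by unfold dt; fun_prop
  have f2 : Continuous (fun p => dt e1 p e3 / dt e1 e2 e3) := by unfold dt; fun_prop
  have f3 : Continuous (fun p => dt e1 e2 p / dt e1 e2 e3) := by unfold dt; fun_prop
  obtain ⟨p1, q1, g1⟩ := hc.exists_isMinOn ⟨c, k0⟩ f1.continuousOn
  obtain ⟨p2, q2, g2⟩ := hc.exists_isMinOn ⟨c, k0⟩ f2.continuousOn
  obtain ⟨p3, q3, g3⟩ := hc.exists_isMinOn ⟨c, k0⟩ f3.continuousOn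
  have g1' : ∀ p ∈ A, dt p1 e2 e3 / dt e1 e2 e3 ≤ dt p e2 e3 / dt e1 e2 e3 := fun p hp => g1 hp
  have g2' : ∀ p ∈ A, dt e1 p2 e3 / dt e1 e2 e3 ≤ dt e1 p e3 / dt e1 e2 e3 := fun p hp => g2 hp
  have g3' : ∀ p ∈ A, dt e1 e2 p3 / dt e1 e2 e3 ≤ dt e1 e2 p / dt e1 e2 e3 := fun p hp => g3 hp
  refine ⟨e1, e2, e3, -(dt p1 e2 e3 / dt e1 e2 e3), -(dt e1 p2 e3 / dt e1 e2 e3),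
    -(dt e1 e2 p3 / dt e1 e2 e3), m1, m2, m3, hne, hmx, ?_, ?_, ?_, ?_, ?_, ?_, ?_⟩
  · have := g1' _ m2
    have h0 : dt e2 e2 e3 = 0 := by simp only [dt]; ring
    rw [h0, zero_div] at this; linarith
  · have := g2' _ m1
    have h0 : dt e1 e1 e3 = 0 := by simp only [dt]; ring
    rw [h0, zero_div] at this; linarith
  · have := g3' _ m1
    have h0 : dt e1 e2 e1 = 0 := by simp only [dt]; ring
    rw [h0, zero_div] at this; linarith
  · intro p hp
    refine ⟨_, _, _, dt_sum e1 e2 e3 p hne, cb_of_dt e1 e2 e3 p hne, ?_, ?_, ?_⟩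
    · rw [neg_neg]; exact g1' p hp
    · rw [neg_neg]; exact g2' p hp
    · rw [neg_neg]; exact g3' p hp
  · refine ⟨dt e1 p1 e3 / dt e1 e2 e3, dt e1 e2 p1 / dt e1 e2 e3, ?_, ?_⟩
    · linarith [dt_sum e1 e2 e3 p1 hne]
    · rw [neg_neg, ← cb_of_dt e1 e2 e3 p1 hne]; exact q1
  · refine ⟨dt p2 e2 e3 / dt e1 e2 e3, dt e1 e2 p2 / dt e1 e2 e3, ?_, ?_⟩
    · linarith [dt_sum e1 e2 e3 p2 hne]
    · rw [neg_neg, ← cb_of_dt e1 e2 e3 p2 hne]; exact q2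
  · refine ⟨dt p3 e2 e3 / dt e1 e2 e3, dt e1 p3 e3 / dt e1 e2 e3, ?_, ?_⟩
    · linarith [dt_sum e1 e2 e3 p3 hne]
    · rw [neg_neg, ← cb_of_dt e1 e2 e3 p3 hne]; exact q3

end BM

namespace BM

noncomputable def frL (e1 e2 e3 : ℝ × ℝ) : (ℝ × ℝ) →ₗ[ℝ] (ℝ × ℝ) where
  toFun p := p.1 • (e1 - e3) + p.2 • (e2 - e3)
  map_add' p q := by simp only [Prod.fst_add, Prod.snd_add]; module
  map_smul' c p := by
    simp only [Prod.smul_fst, Prod.smul_snd, smul_eq_mul, RingHom.id_apply]; module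

theorem frL_inj {e1 e2 e3 : ℝ × ℝ} (h : dt e1 e2 e3 ≠ 0) : Function.Injective (frL e1 e2 e3) := by
  rw [injective_iff_map_eq_zero]
  rintro ⟨x, y⟩ hp
  have h1 : x * (e1.1 - e3.1) + y * (e2.1 - e3.1) = 0 := by
    have := congrArg Prod.fst hp; simpa [frL] using this
  have h2 : x * (e1.2 - e3.2) + y * (e2.2 - e3.2) = 0 := by
    have := congrArg Prod.snd hp; simpa [frL] using this
  have hx : x * dt e1 e2 e3 = 0 := by
    simp only [dt]; linear_combination (e2.2 - e3.2) * h1 - (e2.1 - e3.1) * h2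
  have hy : y * dt e1 e2 e3 = 0 := by
    simp only [dt]; linear_combination (e1.1 - e3.1) * h2 - (e1.2 - e3.2) * h1
  ext
  · exact (mul_eq_zero.1 hx).resolve_right h
  · exact (mul_eq_zero.1 hy).resolve_right h

noncomputable def fr {e1 e2 e3 : ℝ × ℝ} (h : dt e1 e2 e3 ≠ 0) : (ℝ × ℝ) ≃ᵃ[ℝ] (ℝ × ℝ) :=
  (LinearEquiv.ofInjectiveEndo (frL e1 e2 e3) (frL_inj h)).toAffineEquiv.trans
    (AffineEquiv.constVAdd ℝ (ℝ × ℝ) e3)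

theorem fr_apply {e1 e2 e3 : ℝ × ℝ} (h : dt e1 e2 e3 ≠ 0) (p : ℝ × ℝ) :
    fr h p = cb e1 e2 e3 p.1 p.2 (1 - p.1 - p.2) := by
  have : fr h p = e3 + frL e1 e2 e3 p := rfl
  rw [this]
  simp only [frL, cb, LinearMap.coe_mk, AddHom.coe_mk]
  module

structure NB (S : Set (ℝ × ℝ)) (a1 a2 a3 : ℝ) : Prop where
  dd : DD a1 a2 a3
  cv : Convex ℝ S
  zero : (0 : ℝ × ℝ) ∈ S
  lo : ∀ p ∈ S, -a1 ≤ p.1 ∧ -a2 ≤ p.2 ∧ -a3 ≤ 1 - p.1 - p.2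
  hi : ∀ p ∈ S, p.1 ≤ 1 ∧ p.2 ≤ 1 ∧ 1 - p.1 - p.2 ≤ 1
  mem : ∀ z1 z2 z3 : ℝ, z1 + z2 + z3 = 1 → 0 ≤ z1 + a1 * z2 → 0 ≤ z1 + a1 * z3 →
    0 ≤ z2 + a2 * z1 → 0 ≤ z2 + a2 * z3 → 0 ≤ z3 + a3 * z1 → 0 ≤ z3 + a3 * z2 → (z1, z2) ∈ S

theorem exists_NB {A : Set (ℝ × ℝ)} (hA : Convex ℝ A) (hc : IsCompact A)
    (hi : (interior A).Nonempty) :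
    ∃ (h : (ℝ × ℝ) ≃ᵃ[ℝ] (ℝ × ℝ)) (a1 a2 a3 : ℝ), NB (h ⁻¹' A) a1 a2 a3 := by
  obtain ⟨e1, e2, e3, a1, a2, a3, h0⟩ := exists_Pre hc hi
  obtain ⟨e1, e2, e3, a1, a2, a3, h, h21, h32⟩ := h0.sort
  refine ⟨fr h.ne, a1, a2, a3, h.DD h21 h32, ?_, ?_, ?_, ?_, ?_⟩
  · exact hA.affine_preimage (fr h.ne).toAffineMap
  · show fr h.ne 0 ∈ A
    rw [fr_apply]
    simpa [cb] using h.m3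
  · intro p hp
    obtain ⟨x1, x2, x3, hs, he, l1, l2, l3⟩ := h.co _ hp
    have : fr h.ne p = fr h.ne (x1, x2) := by
      rw [he, fr_apply]
      simp only
      rw [show 1 - x1 - x2 = x3 by linarith]
    obtain rfl := (fr h.ne).injective this
    exact ⟨l1, l2, by simp only; linarith⟩
  · intro p hp
    have hp' : cb e1 e2 e3 p.1 p.2 (1 - p.1 - p.2) ∈ A := by rw [← fr_apply h.ne]; exact hp
    obtain ⟨b1, b2, b3⟩ := h.abs1 (by ring) hp'
    exact ⟨(abs_le.1 b1).2, (abs_le.1 b2).2, (abs_le.1 b3).2⟩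
  · intro z1 z2 z3 hz c1 c2 c3 c4 c5 c6
    show fr h.ne (z1, z2) ∈ A
    rw [fr_apply]
    simp only
    rw [show 1 - z1 - z2 = z3 by linarith]
    exact h.mem hA hz c1 c2 c3 c4 c5 c6

theorem pos_aux {a b wj x xj xk : ℝ} (hs : x + xj + xk = 1) (ha : 0 ≤ a) (ha' : a ≤ 1)
    (hx : -b ≤ x) (hk : xk ≤ 1) (hw : 0 ≤ wj) {k : ℝ} (hk0 : 0 ≤ k) :
    0 ≤ k * (x + (1 - a) * b) + a * (k * (xj + wj)) := by
  have : k * (x + (1 - a) * b) + a * (k * (xj + wj)) =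
    k * ((1 - a) * (x + b) + a * (x + xj) + a * wj) := by ring
  rw [this]
  apply mul_nonneg hk0
  have h1 : 0 ≤ (1 - a) * (x + b) := mul_nonneg (by linarith) (by linarith)
  have h2 : 0 ≤ a * (x + xj) := mul_nonneg ha (by linarith)
  have h3 : 0 ≤ a * wj := mul_nonneg ha hw
  linarith

theorem place_pos {S S' : Set (ℝ × ℝ)} {a1 a2 a3 b1 b2 b3 : ℝ} (hS : NB S a1 a2 a3)
    (hS' : NB S' b1 b2 b3) :
    ∃ v : ℝ × ℝ, ∀ x ∈ S',
      v + (1 + ((1 - a1) * b1 + (1 - a2) * b2 + (1 - a3) * b3))⁻¹ • x ∈ S := by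
  obtain ⟨⟨h1, h1'⟩, ⟨h2, h2'⟩, ⟨h3, h3'⟩⟩ := DD_bds hS.dd
  obtain ⟨⟨k1, k1'⟩, ⟨k2, k2'⟩, ⟨k3, k3'⟩⟩ := DD_bds hS'.dd
  have w1 : 0 ≤ (1 - a1) * b1 := mul_nonneg (by linarith) k1
  have w2 : 0 ≤ (1 - a2) * b2 := mul_nonneg (by linarith) k2
  have w3 : 0 ≤ (1 - a3) * b3 := mul_nonneg (by linarith) k3
  obtain ⟨k, hk⟩ : ∃ k, k = (1 + ((1 - a1) * b1 + (1 - a2) * b2 + (1 - a3) * b3))⁻¹ := ⟨_, rfl⟩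
  have hk0 : 0 ≤ k := by rw [hk]; positivity
  have hk1 : k * (1 + ((1 - a1) * b1 + (1 - a2) * b2 + (1 - a3) * b3)) = 1 := by
    rw [hk]; exact inv_mul_cancel₀ (by positivity)
  rw [← hk]
  refine ⟨(k * ((1 - a1) * b1), k * ((1 - a2) * b2)), ?_⟩
  rintro ⟨x, y⟩ hx
  obtain ⟨l1, l2, l3⟩ := hS'.lo _ hx
  obtain ⟨u1, u2, u3⟩ := hS'.hi _ hx
  simp only at l1 l2 l3 u1 u2 u3
  obtain ⟨z, hz⟩ : ∃ z, z = 1 - x - y := ⟨_, rfl⟩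
  rw [← hz] at l3 u3
  have := hS.mem (k * (x + (1 - a1) * b1)) (k * (y + (1 - a2) * b2)) (k * (z + (1 - a3) * b3))
    (by rw [hz]; linarith)
    (pos_aux (by linarith : x + y + z = 1) h1 h1' l1 u3 w2 hk0)
    (pos_aux (by linarith : x + z + y = 1) h1 h1' l1 u2 w3 hk0)
    (pos_aux (by linarith : y + x + z = 1) h2 h2' l2 u3 w1 hk0)
    (pos_aux (by linarith : y + z + x = 1) h2 h2' l2 u1 w3 hk0)
    (pos_aux (by linarith : z + x + y = 1) h3 h3' l3 u2 w1 hk0)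
    (pos_aux (by linarith : z + y + x = 1) h3 h3' l3 u1 w2 hk0)
  convert this using 1
  ext
  · simp only [Prod.fst_add, Prod.smul_fst, smul_eq_mul]; ring
  · simp only [Prod.snd_add, Prod.smul_snd, smul_eq_mul]; ring

theorem neg_aux {a e ej bk x xj xk : ℝ} (hs : x + xj + xk = 1) (ha : 0 ≤ a) (ha' : a ≤ 1)
    (hx : x ≤ 1) (hk : -bk ≤ xk) (he : e + a * ej ≤ a * (1 - bk)) {k : ℝ} (hk0 : 0 ≤ k) :
    0 ≤ k * (1 - e - x) + a * (k * (1 - ej - xj)) := by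
  have : k * (1 - e - x) + a * (k * (1 - ej - xj)) =
    k * ((1 - a) * (1 - x) + a * (2 - (x + xj)) - (e + a * ej)) := by ring
  rw [this]
  apply mul_nonneg hk0
  have h1 : 0 ≤ (1 - a) * (1 - x) := mul_nonneg (by linarith) (by linarith)
  have h2 : a * (1 - bk) ≤ a * (2 - (x + xj)) := mul_le_mul_of_nonneg_left (by linarith) ha
  linarith

theorem place_neg {S S' : Set (ℝ × ℝ)} {a1 a2 a3 b1 b2 b3 e1 e2 e3 : ℝ} (hS : NB S a1 a2 a3)
    (hS' : NB S' b1 b2 b3) (he : FE a1 a2 a3 b1 b2 b3 e1 e2 e3) :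
    ∃ v : ℝ × ℝ, ∀ x ∈ S', v + (-(2 - (e1 + e2 + e3))⁻¹) • x ∈ S := by
  obtain ⟨⟨h1, h1'⟩, ⟨h2, h2'⟩, ⟨h3, h3'⟩⟩ := DD_bds hS.dd
  have hsum := FE_sum hS.dd hS'.dd he
  obtain ⟨⟨n1, n2, n3⟩, c1, c2, c3, c4, c5, c6⟩ := he
  obtain ⟨k, hk⟩ : ∃ k, k = (2 - (e1 + e2 + e3))⁻¹ := ⟨_, rfl⟩
  have hk0 : 0 ≤ k := by rw [hk]; exact inv_nonneg.2 (by linarith)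
  have hk1 : k * (2 - (e1 + e2 + e3)) = 1 := by
    rw [hk]; exact inv_mul_cancel₀ (by linarith)
  rw [← hk]
  refine ⟨(k * (1 - e1), k * (1 - e2)), ?_⟩
  rintro ⟨x, y⟩ hx
  obtain ⟨l1, l2, l3⟩ := hS'.lo _ hx
  obtain ⟨u1, u2, u3⟩ := hS'.hi _ hx
  simp only at l1 l2 l3 u1 u2 u3
  obtain ⟨z, hz⟩ : ∃ z, z = 1 - x - y := ⟨_, rfl⟩
  rw [← hz] at l3 u3
  have := hS.mem (k * (1 - e1 - x)) (k * (1 - e2 - y)) (k * (1 - e3 - z))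
    (by rw [hz]; linarith)
    (neg_aux (by linarith : x + y + z = 1) h1 h1' u1 l3 c1 hk0)
    (neg_aux (by linarith : x + z + y = 1) h1 h1' u1 l2 c2 hk0)
    (neg_aux (by linarith : y + x + z = 1) h2 h2' u2 l3 c3 hk0)
    (neg_aux (by linarith : y + z + x = 1) h2 h2' u2 l1 c4 hk0)
    (neg_aux (by linarith : z + x + y = 1) h3 h3' u3 l2 c5 hk0)
    (neg_aux (by linarith : z + y + x = 1) h3 h3' u3 l1 c6 hk0)
  convert this using 1
  ext
  · simp only [Prod.fst_add, Prod.smul_fst, smul_eq_mul]; ring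
  · simp only [Prod.snd_add, Prod.smul_snd, smul_eq_mul]; ring

/-- shrink a placement towards the origin -/
theorem shrink {S S' : Set (ℝ × ℝ)} (hS : Convex ℝ S) (h0 : (0 : ℝ × ℝ) ∈ S) {v : ℝ × ℝ} {k t : ℝ}
    (h : ∀ x ∈ S', v + k • x ∈ S) (ht : 0 ≤ t) (ht' : t ≤ 1) :
    ∀ x ∈ S', t • v + (t * k) • x ∈ S := by
  intro x hx
  have := hS.smul_mem_of_zero_mem h0 (h x hx) ⟨ht, ht'⟩
  rwa [smul_add, smul_smul] at this

theorem place {S S' : Set (ℝ × ℝ)} {a1 a2 a3 b1 b2 b3 : ℝ} (hS : NB S a1 a2 a3)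
    (hS' : NB S' b1 b2 b3) : ∃ (v1 v2 : ℝ × ℝ) (k1 k2 : ℝ), k1 * k2 = 10000 / 26139 ∧
      (∀ x ∈ S, v1 + k1 • x ∈ S') ∧ (∀ y ∈ S', v2 + k2 • y ∈ S) := by
  have gen : ∀ (κ κ' σ : ℝ) (v v' : ℝ × ℝ), σ * σ = 1 → 0 < κ → 0 < κ' → κ * κ' ≤ 26139 / 10000 →
      (∀ x ∈ S', v + (σ * κ⁻¹) • x ∈ S) → (∀ x ∈ S, v' + (σ * κ'⁻¹) • x ∈ S') →
      ∃ (v1 v2 : ℝ × ℝ) (k1 k2 : ℝ), k1 * k2 = 10000 / 26139 ∧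
      (∀ x ∈ S, v1 + k1 • x ∈ S') ∧ (∀ y ∈ S', v2 + k2 • y ∈ S) := by
    intro κ κ' σ v v' hσ h1 h2 h12 hv hv'
    refine ⟨v', (κ * κ' * (10000 / 26139)) • v, σ * κ'⁻¹, κ * κ' * (10000 / 26139) * (σ * κ⁻¹), ?_,
      hv', shrink hS.cv hS.zero hv (by positivity) (by linarith)⟩
    field_simp
    linear_combination hσ
  rcases six hS.dd hS'.dd with h | ⟨e1, e2, e3, f1, f2, f3, he, hf, h⟩
  · obtain ⟨v, hv⟩ := place_pos hS hS'
    obtain ⟨v', hv'⟩ := place_pos hS' hS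
    obtain ⟨⟨h1, h1'⟩, ⟨h2, h2'⟩, ⟨h3, h3'⟩⟩ := DD_bds hS.dd
    obtain ⟨⟨k1, k1'⟩, ⟨k2, k2'⟩, ⟨k3, k3'⟩⟩ := DD_bds hS'.dd
    refine gen _ _ 1 v v' (by norm_num) ?_ ?_ h (by simpa only [one_mul] using hv)
      (by simpa only [one_mul] using hv')
    · nlinarith [mul_nonneg (sub_nonneg.2 h1') k1, mul_nonneg (sub_nonneg.2 h2') k2,
        mul_nonneg (sub_nonneg.2 h3') k3]
    · nlinarith [mul_nonneg (sub_nonneg.2 k1') h1, mul_nonneg (sub_nonneg.2 k2') h2,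
        mul_nonneg (sub_nonneg.2 k3') h3]
  · obtain ⟨v, hv⟩ := place_neg hS hS' he
    obtain ⟨v', hv'⟩ := place_neg hS' hS hf
    have s1 := FE_sum hS.dd hS'.dd he
    have s2 := FE_sum hS'.dd hS.dd hf
    exact gen _ _ (-1) v v' (by norm_num) (by linarith) (by linarith) h
      (by simpa only [neg_one_mul] using hv) (by simpa only [neg_one_mul] using hv')

theorem sqrt_bd : (26139 : ℝ) / 10000 ≤ (19 - Real.sqrt 73) / 4 := by
  have : Real.sqrt 73 ≤ 8.5444 := by
    rw [Real.sqrt_le_left (by norm_num)]; norm_num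
  linarith

theorem final (A B : Set (ℝ × ℝ)) (cA : Convex ℝ A) (kA : IsCompact A) (iA : (interior A).Nonempty)
    (cB : Convex ℝ B) (kB : IsCompact B) (iB : (interior B).Nonempty) :
    ∃ (T : ℝ × ℝ ≃ᵃ[ℝ] ℝ × ℝ) (c : ℝ × ℝ) (l : ℝ),
      1 ≤ l ∧ l ≤ (19 - Real.sqrt 73) / 4 ∧
      T '' A ⊆ B ∧ B ⊆ AffineMap.homothety c l '' (T '' A) := by
  obtain ⟨g, a1, a2, a3, hA⟩ := exists_NB cA kA iA
  obtain ⟨h, b1, b2, b3, hB⟩ := exists_NB cB kB iB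
  obtain ⟨v1, v2, k1, k2, hk, p1, p2⟩ := place hA hB
  have hk1 : k1 ≠ 0 := by rintro rfl; norm_num at hk
  obtain ⟨M, hM⟩ : ∃ M : (ℝ × ℝ) ≃ᵃ[ℝ] (ℝ × ℝ), ∀ x, M x = v1 + k1 • x :=
    ⟨(LinearEquiv.smulOfNeZero ℝ (ℝ × ℝ) k1 hk1).toAffineEquiv.trans
      (AffineEquiv.constVAdd ℝ (ℝ × ℝ) v1), fun x => rfl⟩
  refine ⟨(g.symm.trans M).trans h, h ((26139 / 16139 : ℝ) • (v1 + k1 • v2)), 26139 / 10000,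
    by norm_num, sqrt_bd, ?_, ?_⟩
  · rintro _ ⟨x, hx, rfl⟩
    have := p1 (g.symm x) (by simpa using hx)
    rw [← hM] at this
    exact this
  · intro y hy
    have hy' := p2 (h.symm y) (by simpa using hy)
    refine ⟨_, ⟨g (v2 + k2 • h.symm y), hy', rfl⟩, ?_⟩
    simp only [AffineEquiv.trans_apply, AffineEquiv.symm_apply_apply, hM]
    rw [AffineMap.homothety_eq_lineMap, ← AffineEquiv.apply_lineMap]
    rw [← h.eq_symm_apply]
    rw [AffineMap.lineMap_apply_module, smul_add k1, smul_smul k1 k2, hk]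
    module

end BM

theorem stmt_0 (A B : Set (ℝ × ℝ)) (hA : IsConvexBody A) (hB : IsConvexBody B) :
    ∃ (T : ℝ × ℝ ≃ᵃ[ℝ] ℝ × ℝ) (c : ℝ × ℝ) (l : ℝ),
      1 ≤ l ∧ l ≤ (19 - Real.sqrt 73) / 4 ∧
      T '' A ⊆ B ∧ B ⊆ AffineMap.homothety c l '' (T '' A) := by
  exact BM.final A B hA.1 hA.2.1 hA.2.2 hB.1 hB.2.1 hB.2.2
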